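/- Let f̃ ∈ H²(𝔻²) and let q be a two-variable polynomial of bidegree (N, M) whose reflection q⃖ satisfies q⃖(0) ≠ 0 (i.e., the coefficient of z^N w^M in q is nonzero). Set f = q·f̃ and suppose f(0) ≠ 0. Then for every n ≥ 0 there exists a complex constant c such that p_n*[f] = c · p_n*[q⃖·f̃]. -/

import Mathlib

noncomputable section

open Finset

/-- Coefficients of a formal power series in two variables `z, w`
(the coefficient of `z^j w^k` is the value at `(j, k)`). -/
abbrev Coef := ℕ × ℕ → ℂ

/-- Coefficients of a formal power series in one variable. -/
abbrev Coef1 := ℕ → ℂ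

/-- Membership in the Hardy space `H²(𝔻²)`: square-summable coefficients. -/
def MemH2 (f : Coef) : Prop := Summable (fun jk : ℕ × ℕ => ‖f jk‖ ^ 2)

/-- Membership in the Hardy space `H²(𝔻)`. -/
def MemH2₁ (f : Coef1) : Prop := Summable (fun j : ℕ => ‖f j‖ ^ 2)

/-- The `H²(𝔻²)` inner product `⟨f, g⟩ = ∑ a_{jk} conj (b_{jk})`. -/
def Hinner (f g : Coef) : ℂ := ∑' jk : ℕ × ℕ, f jk * (starRingEnd ℂ) (g jk)

/-- The `H²(𝔻²)` norm. -/
def Hnorm (f : Coef) : ℝ := Real.sqrt (∑' jk : ℕ × ℕ, ‖f jk‖ ^ 2)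

/-- The `H²(𝔻)` norm. -/
def Hnorm1 (f : Coef1) : ℝ := Real.sqrt (∑' j : ℕ, ‖f j‖ ^ 2)

/-- The constant function `1` as an element of `H²(𝔻²)`. -/
def oneH : Coef := fun jk => if jk = (0, 0) then 1 else 0

/-- The constant function `1` as an element of `H²(𝔻)`. -/
def oneH1 : Coef1 := fun j => if j = 0 then 1 else 0

/-- Cauchy product `q·f` of two formal power series in two variables
(used for multiplication of `f ∈ H²(𝔻²)` by a polynomial `q`). -/
def pmul (q f : Coef) : Coef := fun jk =>
  ∑ a ∈ range (jk.1 + 1), ∑ b ∈ range (jk.2 + 1), q (a, b) * f (jk.1 - a, jk.2 - b)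

/-- Multiplication of a one-variable power series by a one-variable polynomial. -/
def pmul1 (q : Polynomial ℂ) (f : Coef1) : Coef1 := fun j =>
  ∑ a ∈ range (j + 1), q.coeff a * f (j - a)

/-- Degree-lexicographic enumeration of the monomials in `z, w`:
`chi 0 = (0,0) ↔ 1`, `chi 1 = (1,0) ↔ z`, `chi 2 = (0,1) ↔ w`,
`chi 3 = (2,0) ↔ z²`, `chi 4 = (1,1) ↔ zw`, `chi 5 = (0,2) ↔ w²`, … -/
def chi : ℕ → ℕ × ℕ
  | 0 => (0, 0)
  | n + 1 =>
    let p := chi n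
    if p.1 = 0 then (p.2 + 1, 0) else (p.1 - 1, p.2 + 1)

/-- The monomial `z^(ab.1) w^(ab.2)` as a coefficient function. -/
def mono (ab : ℕ × ℕ) : Coef := fun jk => if jk = ab then 1 else 0

/-- `p` lies in `P_n = span {χ_0, …, χ_n}`. -/
def inPn (n : ℕ) (p : Coef) : Prop := ∀ ab, p ab ≠ 0 → ∃ k ≤ n, chi k = ab

/-- `p` is a (two-variable) polynomial: finitely many nonzero coefficients. -/
def IsPoly2 (p : Coef) : Prop := (Function.support p).Finite

/-- Evaluation of a power series at the point `(z, w)`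
(absolutely convergent for `f ∈ H²(𝔻²)` and `(z,w)` in the open bidisk,
and for any polynomial at any point). -/
def heval (f : Coef) (z w : ℂ) : ℂ := ∑' jk : ℕ × ℕ, f jk * z ^ jk.1 * w ^ jk.2

/-- `p` is the `n`-th optimal polynomial approximant to `1/f`:
`p ∈ P_n` and `p` minimizes `‖qf - 1‖` over `q ∈ P_n`. -/
def IsOPA (f : Coef) (n : ℕ) (p : Coef) : Prop :=
  inPn n p ∧ ∀ q : Coef, inPn n q →
    Hnorm (pmul p f - oneH) ≤ Hnorm (pmul q f - oneH)

/-- `q` has bidegree `(N, M)`: degree `N` in `z` and degree `M` in `w`. -/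
def HasBidegree (q : Coef) (N M : ℕ) : Prop :=
  (∀ a b : ℕ, q (a, b) ≠ 0 → a ≤ N ∧ b ≤ M) ∧ (∃ b, q (N, b) ≠ 0) ∧ (∃ a, q (a, M) ≠ 0)

/-- Reflection of a polynomial of bidegree `(N, M)`:
the coefficient of `z^j w^k` is `conj` of the coefficient of `z^(N-j) w^(M-k)`. -/
def reflPoly (N M : ℕ) (q : Coef) : Coef := fun jk =>
  if jk.1 ≤ N ∧ jk.2 ≤ M then (starRingEnd ℂ) (q (N - jk.1, M - jk.2)) else 0

/-- The degree-lexicographic index of the monomial `z^(ab.1) w^(ab.2)`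
(the inverse of `chi`). -/
def lexIndex (ab : ℕ × ℕ) : ℕ := (ab.1 + ab.2) * (ab.1 + ab.2 + 1) / 2 + ab.2

/-- `pound k j` = the degree-lexicographic index `£(k,j)` of the monomial `(χ_k)^j`. -/
def pound (k j : ℕ) : ℕ := lexIndex (j * (chi k).1, j * (chi k).2)

/-- The linear factor `z - α` as a coefficient function. -/
def linZ (α : ℂ) : Coef := fun jk => if jk = (1, 0) then 1 else if jk = (0, 0) then -α else 0

/-- The linear factor `w - β` as a coefficient function. -/
def linW (β : ℂ) : Coef := fun jk => if jk = (0, 1) then 1 else if jk = (0, 0) then -β else 0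

/-!
The polynomial `p_n*[f]` solves a least squares problem, so it is determined by the equations
`⟨r f, p f⟩ = ⟨r f, 1⟩ = conj (r(0) f(0))` for all `r ∈ P_n`. Write `g = q⃖ f̃`. The monomial shifts
of `H²(𝔻²)` are commuting isometries, whence `‖q⃖ h‖ = ‖q h‖` for every `h`; this replaces the
identity `|q⃖| = |q|` on the torus. Taking `h = r f̃` gives `‖r g‖ = ‖r f‖`, and by polarization
the Gram forms of `f` and `g` on polynomials coincide. The right-hand sides differ only by the
factor `conj (q(0)) / conj (q⃖(0))`, and hence so do the solutions.
-/

section LeastSquares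

open scoped InnerProductSpace

variable {𝕜 V E E' : Type*} [RCLike 𝕜] [AddCommGroup V] [Module 𝕜 V]
  [NormedAddCommGroup E] [InnerProductSpace 𝕜 E] [NormedAddCommGroup E'] [InnerProductSpace 𝕜 E']

theorem inner_map_eq_inner_of_forall_norm_sub_le (T : V →ₗ[𝕜] E) {e : E} {p : V}
    (hp : ∀ r, ‖T p - e‖ ≤ ‖T r - e‖) (r : V) : ⟪T r, T p⟫_𝕜 = ⟪T r, e⟫_𝕜 := by
  have hmin : ‖e - T p‖ = ⨅ x : LinearMap.range T, ‖e - x‖ := by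
    refine le_antisymm (le_ciInf ?_) (ciInf_le ⟨0, ?_⟩ (⟨T p, p, rfl⟩ : LinearMap.range T))
    · rintro ⟨_, s, rfl⟩
      simpa only [norm_sub_rev e] using hp s
    · rintro _ ⟨x, rfl⟩
      exact norm_nonneg _
  have horth := ((LinearMap.range T).norm_eq_iInf_iff_inner_eq_zero ⟨p, rfl⟩).1 hmin (T r) ⟨r, rfl⟩
  rw [inner_eq_zero_symm, inner_sub_right, sub_eq_zero] at horth
  exact horth.symm

theorem inner_map_eq_inner_map_of_norm_eq {T : V →ₗ[𝕜] E} {T' : V →ₗ[𝕜] E'}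
    (h : ∀ r, ‖T r‖ = ‖T' r‖) (r s : V) : ⟪T r, T s⟫_𝕜 = ⟪T' r, T' s⟫_𝕜 := by
  simp only [inner_eq_sum_norm_sq_div_four, ← map_smul, ← map_add, ← map_sub, h]

theorem eq_smul_of_forall_norm_sub_le {T : V →ₗ[𝕜] E} {T' : V →ₗ[𝕜] E'} {e : E} {e' : E'}
    {p p' : V} {c : 𝕜} (hT : Function.Injective T) (hnorm : ∀ r, ‖T r‖ = ‖T' r‖)
    (he : ∀ r, ⟪T r, e⟫_𝕜 = c * ⟪T' r, e'⟫_𝕜) (hp : ∀ r, ‖T p - e‖ ≤ ‖T r - e‖)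
    (hp' : ∀ r, ‖T' p' - e'‖ ≤ ‖T' r - e'‖) : p = c • p' := by
  have hinner (r : V) : ⟪T r, T p⟫_𝕜 = ⟪T r, T (c • p')⟫_𝕜 := by
    rw [inner_map_eq_inner_of_forall_norm_sub_le T hp, he,
      ← inner_map_eq_inner_of_forall_norm_sub_le T' hp', map_smul, inner_smul_right,
      inner_map_eq_inner_map_of_norm_eq hnorm]
  refine hT (sub_eq_zero.1 (inner_self_eq_zero (𝕜 := 𝕜).1 ?_))
  rw [inner_sub_right, sub_eq_zero, ← map_sub, hinner]

end LeastSquares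

section Shift

open scoped InnerProductSpace

variable {𝕜 E M : Type*} [RCLike 𝕜] [NormedAddCommGroup E] [InnerProductSpace 𝕜 E]
  [AddCommMonoid M] {S : M → E →ₗᵢ[𝕜] E}

theorem inner_apply_eq_inner_apply_of_add_eq (hS : ∀ a b x, S (a + b) x = S a (S b x))
    {a b a' b' : M} (h : a + b = a' + b') (x : E) : ⟪S a x, S a' x⟫_𝕜 = ⟪S b' x, S b x⟫_𝕜 := by
  -- Both sides are equal to `⟪S (d + b') x, S (d + b) x⟫`, where `d = a + b = a' + b'`.
  rw [← (S (b + b')).inner_map_map, ← (S (a + b)).inner_map_map (S b' x), ← hS, ← hS, ← hS, ← hS]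
  congr 3
  · abel
  · rw [h]
    abel

theorem norm_sum_conj_smul_eq (hS : ∀ a b x, S (a + b) x = S a (S b x)) {ι : Type*}
    (s : Finset ι) {a b : ι → M} {d : M} (h : ∀ i ∈ s, a i + b i = d) (c : ι → 𝕜) (x : E) :
    ‖∑ i ∈ s, starRingEnd 𝕜 (c i) • S (b i) x‖ = ‖∑ i ∈ s, c i • S (a i) x‖ := by
  have hinner : ⟪∑ i ∈ s, starRingEnd 𝕜 (c i) • S (b i) x,
      ∑ i ∈ s, starRingEnd 𝕜 (c i) • S (b i) x⟫_𝕜 =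
      ⟪∑ i ∈ s, c i • S (a i) x, ∑ i ∈ s, c i • S (a i) x⟫_𝕜 := by
    simp only [sum_inner, inner_sum, inner_smul_left, inner_smul_right, mul_sum, RCLike.conj_conj]
    rw [sum_comm]
    refine sum_congr rfl fun i hi => sum_congr rfl fun j hj => ?_
    rw [inner_apply_eq_inner_apply_of_add_eq hS ((h j hj).trans (h i hi).symm)]
    ring
  rw [norm_eq_sqrt_re_inner (𝕜 := 𝕜), hinner, ← norm_eq_sqrt_re_inner]

end Shift

section ExtendByZero

variable {α β 𝕜 F : Type*} [NormedAddCommGroup F]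

theorem norm_rpow_extend_zero (φ : α → β) (h : α → F) {s : ℝ} (hs : s ≠ 0) :
    (fun b => ‖Function.extend φ h 0 b‖ ^ s) = Function.extend φ (fun a => ‖h a‖ ^ s) 0 := by
  funext b
  rw [Function.apply_extend (fun y : F => ‖y‖ ^ s)]
  congr 1
  funext
  simp [hs]

theorem memℓp_two_extend_zero (φ : α ↪ β) (h : lp (fun _ : α => F) 2) :
    Memℓp (Function.extend φ h 0) 2 := by
  refine memℓp_gen ?_
  rw [norm_rpow_extend_zero _ _ (by norm_num), summable_extend_zero φ.injective]
  exact (lp.memℓp h).summable (by norm_num)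

variable (𝕜) [RCLike 𝕜] [NormedSpace 𝕜 F]

/-- Extension by zero along an injection, as an isometry of `ℓ²` spaces. -/
def extendByZero (φ : α ↪ β) : lp (fun _ : α => F) 2 →ₗᵢ[𝕜] lp (fun _ : β => F) 2 where
  toFun h := ⟨Function.extend φ h 0, memℓp_two_extend_zero φ h⟩
  map_add' h k := lp.ext <| by
    simpa using! Function.extend_add φ ⇑h ⇑k 0 0
  map_smul' c h := lp.ext <| by
    simpa using! Function.extend_smul c φ ⇑h 0
  norm_map' h := by
    rw [lp.norm_eq_tsum_rpow (by norm_num), lp.norm_eq_tsum_rpow (by norm_num)]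
    congr 1
    exact (congrArg tsum (norm_rpow_extend_zero φ h (by norm_num))).trans
      (tsum_extend_zero φ.injective _)

theorem extendByZero_apply_apply (φ : α ↪ β) (h : lp (fun _ : α => F) 2) (a : α) :
    extendByZero 𝕜 φ h (φ a) = h a :=
  φ.injective.extend_apply _ _ a

theorem extendByZero_apply_of_notMem_range (φ : α ↪ β) (h : lp (fun _ : α => F) 2) {b : β}
    (hb : b ∉ Set.range φ) : extendByZero 𝕜 φ h b = 0 :=
  Function.extend_apply' _ _ _ hb

end ExtendByZero

section PowerSeries

/-- The power series with coefficients `f`, encoded as a power series in `z` over power series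
in `w`; it turns `pmul` into the product of an integral domain. -/
def toPowerSeries (f : Coef) : PowerSeries (PowerSeries ℂ) :=
  PowerSeries.mk fun j => PowerSeries.mk fun k => f (j, k)

theorem coeff_coeff_toPowerSeries (f : Coef) (j k : ℕ) :
    PowerSeries.coeff k (PowerSeries.coeff j (toPowerSeries f)) = f (j, k) := by
  rw [toPowerSeries, PowerSeries.coeff_mk, PowerSeries.coeff_mk]

theorem toPowerSeries_injective : Function.Injective toPowerSeries := fun f g h => by
  funext ⟨j, k⟩
  rw [← coeff_coeff_toPowerSeries f, h, coeff_coeff_toPowerSeries]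

theorem toPowerSeries_zero : toPowerSeries 0 = 0 := by
  ext j k
  simp [coeff_coeff_toPowerSeries]

theorem toPowerSeries_pmul (r f : Coef) :
    toPowerSeries (pmul r f) = toPowerSeries r * toPowerSeries f := by
  ext j k
  simp only [PowerSeries.coeff_mul, map_sum, coeff_coeff_toPowerSeries, pmul,
    Nat.sum_antidiagonal_eq_sum_range_succ_mk]

theorem pmul_left_comm (r s f : Coef) : pmul r (pmul s f) = pmul s (pmul r f) :=
  toPowerSeries_injective <| by simp only [toPowerSeries_pmul, mul_left_comm]

theorem pmul_eq_zero {r f : Coef} : pmul r f = 0 ↔ r = 0 ∨ f = 0 := by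
  simp only [← toPowerSeries_injective.eq_iff, toPowerSeries_pmul, toPowerSeries_zero,
    mul_eq_zero]

end PowerSeries

theorem pmul_zero_zero (r f : Coef) : pmul r f (0, 0) = r (0, 0) * f (0, 0) := by
  simp [pmul]

theorem add_pmul (r s f : Coef) : pmul (r + s) f = pmul r f + pmul s f := by
  funext x
  simp [pmul, sum_add_distrib, add_mul]

theorem smul_pmul (c : ℂ) (r f : Coef) : pmul (c • r) f = c • pmul r f := by
  funext x
  simp [pmul, mul_sum, mul_assoc]

section Hardy

open scoped InnerProductSpace

/-- The Hardy space `H²(𝔻²)` as a Hilbert space of coefficient families. -/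
abbrev H2 := lp (fun _ : ℕ × ℕ => ℂ) 2

theorem memH2_iff_memℓp (f : Coef) : MemH2 f ↔ Memℓp f 2 := by
  rw [memℓp_gen_iff (by norm_num), MemH2]
  norm_num

theorem Hnorm_coe (h : H2) : Hnorm h = ‖h‖ := by
  rw [lp.norm_eq_tsum_rpow (by norm_num), Hnorm, Real.sqrt_eq_rpow]
  norm_num

theorem coe_single_zero : ((lp.single 2 (0, 0) 1 : H2) : Coef) = oneH := by
  funext x
  rw [lp.coeFn_single, Pi.single_apply, oneH]

/-- Multiplication by the monomial `z^a.1 w^a.2` on `H²(𝔻²)`. -/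
def shift (a : ℕ × ℕ) : H2 →ₗᵢ[ℂ] H2 :=
  extendByZero ℂ (addLeftEmbedding a)

theorem shift_apply_of_le {a x : ℕ × ℕ} (hax : a ≤ x) (h : H2) : shift a h x = h (x - a) := by
  obtain ⟨b, rfl⟩ := exists_add_of_le hax
  rw [add_tsub_cancel_left]
  exact extendByZero_apply_apply ℂ (addLeftEmbedding a) h b

theorem shift_apply_of_not_le {a x : ℕ × ℕ} (hax : ¬a ≤ x) (h : H2) : shift a h x = 0 := by
  refine extendByZero_apply_of_notMem_range ℂ (addLeftEmbedding a) h ?_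
  rintro ⟨b, rfl⟩
  exact hax le_self_add

theorem shift_add (a b : ℕ × ℕ) (h : H2) : shift (a + b) h = shift a (shift b h) := by
  ext x
  by_cases hax : a ≤ x
  · obtain ⟨y, rfl⟩ := exists_add_of_le hax
    rw [shift_apply_of_le hax, add_tsub_cancel_left]
    by_cases hby : b ≤ y
    · rw [shift_apply_of_le (add_le_add_right hby a), shift_apply_of_le hby,
        add_tsub_add_eq_tsub_left]
    · rw [shift_apply_of_not_le (mt le_of_add_le_add_left hby), shift_apply_of_not_le hby]
  · rw [shift_apply_of_not_le hax, shift_apply_of_not_le (mt le_self_add.trans hax)]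

theorem pmul_apply (r f : Coef) (x : ℕ × ℕ) :
    pmul r f x = ∑ a ∈ Iic x, r a * f (x - a) := by
  rw [pmul, ← sum_product', Nat.range_succ_eq_Iic, Nat.range_succ_eq_Iic, Iic_product_Iic]
  rfl

theorem pmul_eq_sum_shift {r : Coef} {s : Finset (ℕ × ℕ)} (hs : Function.support r ⊆ s) (h : H2) :
    pmul r h = ⇑(∑ a ∈ s, r a • shift a h) := by
  funext x
  have hs' : (Function.support fun a => r a * shift a h x) ⊆ s :=
    (Function.support_mul_subset_left _ _).trans hs
  have hIic : (Function.support fun a => r a * shift a h x) ⊆ Iic x := fun a ha => by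
    by_contra hax
    rw [mem_coe, mem_Iic] at hax
    exact ha (by simp only [shift_apply_of_not_le hax, mul_zero])
  calc pmul r h x = ∑ a ∈ Iic x, r a * shift a h x := by
        rw [pmul_apply]
        exact sum_congr rfl fun a ha => by rw [shift_apply_of_le (mem_Iic.1 ha)]
    _ = ∑ᶠ a, r a * shift a h x := (finsum_eq_sum_of_support_subset _ hIic).symm
    _ = ∑ a ∈ s, r a * shift a h x := finsum_eq_sum_of_support_subset _ hs'
    _ = (∑ a ∈ s, r a • shift a h : H2) x := by
        rw [lp.coeFn_sum, Finset.sum_apply]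
        rfl

/-- The polynomials in `z, w`, as a space of coefficient families. -/
def polynomials : Submodule ℂ Coef where
  carrier := {r | IsPoly2 r}
  add_mem' hr hs := (hr.union hs).subset (Function.support_add _ _)
  zero_mem' := by simp [IsPoly2]
  smul_mem' c r hr := hr.subset (Function.support_const_smul_subset c r)

theorem memℓp_pmul (r : polynomials) (h : H2) : Memℓp (pmul r h) 2 := by
  have hr : Function.support r.1 ⊆ r.2.toFinset := r.2.coe_toFinset.superset
  rw [pmul_eq_sum_shift hr h]
  exact lp.memℓp _

/-- The linear map `r ↦ r·h` from polynomials to `H²(𝔻²)`. -/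
def polyMul (h : H2) : polynomials →ₗ[ℂ] H2 where
  toFun r := ⟨pmul r h, memℓp_pmul r h⟩
  map_add' r s := lp.ext (add_pmul r s h)
  map_smul' c r := lp.ext (smul_pmul c r h)

theorem coe_polyMul (h : H2) (r : polynomials) : polyMul h r = pmul r h :=
  rfl

theorem polyMul_comm (h : H2) (r s : polynomials) :
    polyMul (polyMul h r) s = polyMul (polyMul h s) r :=
  lp.ext (pmul_left_comm s r h)

theorem polyMul_injective {h : H2} (hh : h ≠ 0) : Function.Injective (polyMul h) := by
  refine (injective_iff_map_eq_zero _).2 fun r hr => ?_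
  rw [lp.eq_zero_iff_coeFn_eq_zero, coe_polyMul, pmul_eq_zero] at hr
  exact Subtype.ext (hr.resolve_right (mt lp.eq_zero_iff_coeFn_eq_zero.2 hh))

theorem inner_polyMul_single_zero (h : H2) (r : polynomials) :
    ⟪polyMul h r, lp.single 2 (0, 0) 1⟫_ℂ =
      starRingEnd ℂ (r.1 (0, 0) * h (0, 0)) := by
  rw [lp.inner_single_right, coe_polyMul, pmul_zero_zero, RCLike.inner_apply, one_mul]

theorem norm_polyMul_sub_single_zero (h : H2) (r : polynomials) :
    ‖polyMul h r - lp.single 2 (0, 0) 1‖ = Hnorm (pmul r h - oneH) := by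
  rw [← Hnorm_coe, lp.coeFn_sub, coe_single_zero, coe_polyMul]

theorem isPoly2_of_support_subset_Iic {r : Coef} {d : ℕ × ℕ}
    (hr : Function.support r ⊆ Set.Iic d) : IsPoly2 r :=
  (Set.finite_Iic d).subset hr

theorem polyMul_eq_sum_Iic_shift {r : polynomials} {d : ℕ × ℕ}
    (hr : Function.support r.1 ⊆ Set.Iic d) (h : H2) :
    polyMul h r = ∑ a ∈ Iic d, r.1 a • shift a h :=
  lp.ext (pmul_eq_sum_shift (hr.trans (coe_Iic d).superset) h)

theorem support_reflPoly_subset (N M : ℕ) (q : Coef) :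
    Function.support (reflPoly N M q) ⊆ Set.Iic (N, M) := fun _ ha => by
  by_contra hle
  exact ha (if_neg hle)

theorem isPoly2_reflPoly (N M : ℕ) (q : Coef) : IsPoly2 (reflPoly N M q) :=
  isPoly2_of_support_subset_Iic (support_reflPoly_subset N M q)

theorem reflPoly_apply_of_le {N M : ℕ} {a : ℕ × ℕ} (ha : a ≤ (N, M)) (q : Coef) :
    reflPoly N M q a = starRingEnd ℂ (q ((N, M) - a)) :=
  if_pos ha

theorem reflPoly_zero_zero (N M : ℕ) (q : Coef) :
    reflPoly N M q (0, 0) = starRingEnd ℂ (q (N, M)) :=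
  reflPoly_apply_of_le (Prod.mk_le_mk.2 ⟨N.zero_le, M.zero_le⟩) q

theorem sum_Iic_reflPoly_smul_shift (N M : ℕ) (q : Coef) (h : H2) :
    ∑ a ∈ Iic (N, M), reflPoly N M q a • shift a h =
      ∑ a ∈ Iic (N, M), starRingEnd ℂ (q a) • shift ((N, M) - a) h := by
  have hmem (a : ℕ × ℕ) (_ : a ∈ Iic (N, M)) : (N, M) - a ∈ Iic (N, M) := mem_Iic.2 tsub_le_self
  have hinv (a : ℕ × ℕ) (ha : a ∈ Iic (N, M)) : (N, M) - ((N, M) - a) = a :=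
    tsub_tsub_cancel_of_le (mem_Iic.1 ha)
  refine sum_nbij' ((N, M) - ·) ((N, M) - ·) hmem hmem hinv hinv fun a ha => ?_
  rw [reflPoly_apply_of_le (mem_Iic.1 ha), hinv a ha]

theorem norm_polyMul_reflPoly {N M : ℕ} {q : polynomials}
    (hq : Function.support q.1 ⊆ Set.Iic (N, M)) (h : H2) :
    ‖polyMul h ⟨reflPoly N M q, isPoly2_reflPoly N M q⟩‖ = ‖polyMul h q‖ := by
  rw [polyMul_eq_sum_Iic_shift hq, polyMul_eq_sum_Iic_shift (support_reflPoly_subset N M q),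
    sum_Iic_reflPoly_smul_shift]
  exact norm_sum_conj_smul_eq shift_add _
    (fun a ha => add_tsub_cancel_of_le (mem_Iic.1 ha)) q.1 h

end Hardy

section OptimalApproximants

/-- `p` is an optimal approximant to `1/f` within the space `V`: it minimizes `‖pf - 1‖` over
`V`, which need not be one of the spaces `P_n`. -/
def IsOPAIn (V : Submodule ℂ Coef) (f p : Coef) : Prop :=
  p ∈ V ∧ ∀ r ∈ V, Hnorm (pmul p f - oneH) ≤ Hnorm (pmul r f - oneH)

theorem IsOPAIn.norm_polyMul_sub_le {V : Submodule ℂ Coef} (hV : V ≤ polynomials) {h : H2}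
    {p : Coef} (hp : IsOPAIn V h p) (r : V) :
    ‖(polyMul h ∘ₗ Submodule.inclusion hV) ⟨p, hp.1⟩ - lp.single 2 (0, 0) 1‖ ≤
      ‖(polyMul h ∘ₗ Submodule.inclusion hV) r - lp.single 2 (0, 0) 1‖ := by
  simpa only [LinearMap.comp_apply, norm_polyMul_sub_single_zero, Submodule.coe_inclusion]
    using hp.2 r r.2

/-- The space `P_n` spanned by the first `n + 1` monomials. -/
def initialPolynomials (n : ℕ) : Submodule ℂ Coef where
  carrier := {p | inPn n p}
  add_mem' hp hr a ha := (Function.support_add _ _ ha).elim (hp a) (hr a)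
  zero_mem' _ ha := absurd rfl ha
  smul_mem' c p hp a ha := hp a (Function.support_const_smul_subset c p ha)

theorem initialPolynomials_le_polynomials (n : ℕ) : initialPolynomials n ≤ polynomials :=
  fun _ hp => ((Set.finite_Iic n).image chi).subset hp

theorem statement5_general {ftilde q : Coef} (hft : MemH2 ftilde) (hft0 : ftilde ≠ 0) {N M : ℕ}
    (hq : Function.support q ⊆ Set.Iic (N, M)) (hqNM : q (N, M) ≠ 0) {V : Submodule ℂ Coef}
    (hV : V ≤ polynomials) {p p' : Coef} (hp : IsOPAIn V (pmul q ftilde) p)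
    (hp' : IsOPAIn V (pmul (reflPoly N M q) ftilde) p') :
    p = (starRingEnd ℂ (q (0, 0)) / q (N, M)) • p' := by
  let h : H2 := ⟨ftilde, (memH2_iff_memℓp ftilde).1 hft⟩
  let Q : polynomials := ⟨q, isPoly2_of_support_subset_Iic hq⟩
  let Q' : polynomials := ⟨reflPoly N M q, isPoly2_reflPoly N M q⟩
  let ι := Submodule.inclusion hV
  have hQ : Q ≠ 0 := fun hQ => hqNM (congrFun (congrArg Subtype.val hQ) (N, M))
  have hh : h ≠ 0 := fun hh => hft0 (congrArg Subtype.val hh)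
  have hinj : Function.Injective (polyMul (polyMul h Q) ∘ₗ ι) :=
    (polyMul_injective ((map_ne_zero_iff _ (polyMul_injective hh)).2 hQ)).comp
      (Submodule.inclusion_injective hV)
  have hnorm (r : V) : ‖(polyMul (polyMul h Q) ∘ₗ ι) r‖ = ‖(polyMul (polyMul h Q') ∘ₗ ι) r‖ := by
    rw [LinearMap.comp_apply, LinearMap.comp_apply, polyMul_comm h Q, polyMul_comm h Q']
    exact (norm_polyMul_reflPoly hq _).symm
  refine congrArg Subtype.val (eq_smul_of_forall_norm_sub_le hinj hnorm (fun r => ?_)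
    (IsOPAIn.norm_polyMul_sub_le hV (h := polyMul h Q) hp)
    (IsOPAIn.norm_polyMul_sub_le hV (h := polyMul h Q') hp'))
  simp only [LinearMap.comp_apply, inner_polyMul_single_zero, coe_polyMul, pmul_zero_zero, Q, Q',
    reflPoly_zero_zero, map_mul, Complex.conj_conj]
  field_simp

end OptimalApproximants

/-- Let `q` be a polynomial of bidegree `(N, M)` whose reflection is nonzero
at the origin, let `f = q·f̃` with `f(0) ≠ 0`. Then for every `n` there is a constant `c` with
`p_n*[f] = c · p_n*[q⃖·f̃]`. -/
theorem statement5 (ftilde q : Coef) (hft : MemH2 ftilde) (N M : ℕ)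
    (hq : HasBidegree q N M) (hrefl0 : reflPoly N M q (0, 0) ≠ 0)
    (hf0 : pmul q ftilde (0, 0) ≠ 0) (n : ℕ) (p p' : Coef)
    (hp : IsOPA (pmul q ftilde) n p) (hp' : IsOPA (pmul (reflPoly N M q) ftilde) n p') :
    ∃ c : ℂ, p = c • p' := by
  rw [reflPoly_zero_zero, map_ne_zero] at hrefl0
  have hft0 : ftilde ≠ 0 := fun hft0 => hf0 (by rw [pmul_eq_zero.2 (.inr hft0), Pi.zero_apply])
  exact ⟨_, statement5_general hft hft0 (fun a ha => hq.1 a.1 a.2 ha) hrefl0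
    (initialPolynomials_le_polynomials n) hp hp'⟩
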